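/- Let F = ρ + Δ be a bipartite Finsler norm on ℝ^n and let y ∈ ℝ^n ∖ S be a point at which the matrix (g_{jk}(y)) is invertible and κ := n + 1 − (F²/Δ) g^{kl} Δ_{kl} is nonzero. Then the characteristic (bipartite) tensor vanishes at y: for all indices j, k, l, S_{jkl} := C_{jkl} − (1/κ) Σ_{(jkl)} ( I_j + (F²/((F−Δ)Δ)) g^{mn} Δ_m Δ_{nj} ) ( h_{kl} − (F²/Δ) Δ_{kl} ) = 0, where Σ_{(jkl)} denotes the sum over the three cyclic permutations of (j,k,l) and repeated indices m, n are summed. -/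

import Mathlib

/-!
Write `ρ = ‖·‖`, so that `F = ρ + Δ`, where `ρ²` and `Δ²` are quadratic forms. For any smooth `N`
whose square is a quadratic form, differentiating `N² = b(z, z)` three times gives
`N N_{jkl} + N_j N_{kl} + N_k N_{lj} + N_l N_{jk} = 0` (`norm_third`), together with the Euler
relations `y^j N_j = N` and `y^j N_{jk} = 0`. Inserting this for `N = ρ` and `N = Δ` in
`2 C_{jkl} = F F_{jkl} + F_j F_{kl} + F_k F_{lj} + F_l F_{jk}` makes the Cartan torsion factor:
`C_{jkl} = P_j B_{kl} + P_k B_{lj} + P_l B_{jk}` with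
`P_j = (Δ_j - (Δ/ρ) ρ_j) / (2F)` and `B_{kl} = h_{kl} - (F²/Δ) Δ_{kl} = F (ρ_{kl} - (ρ/Δ) Δ_{kl})`.

It remains to see that `I_j + (F²/(ρΔ)) g^{mn} Δ_m Δ_{nj} = κ P_j`. Since `g_{kl} y^l = F F_k`, the
inverse satisfies `g^{kl} F_l = y^k / F`, hence `g^{kl} B_{kl} = κ - 2` and
`2 g^{kl} P_k B_{lj} = 2 P_j - (F²/(ρΔ)) g^{kl} Δ_k Δ_{lj}`; tracing the factored `C` gives the
claim (`bipartite_algebra`).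

Division by `F(y)` is legitimate because `F(y) = 0` would give `g y = 0` with `y ≠ 0`, against
invertibility of `g`.
-/

open scoped RealInnerProductSpace

/-- Partial derivative in the `j`-th standard coordinate direction. -/
noncomputable def pd {n : ℕ} (f : EuclideanSpace ℝ (Fin n) → ℝ) (j : Fin n) :
    EuclideanSpace ℝ (Fin n) → ℝ :=
  fun y => fderiv ℝ f y (EuclideanSpace.single j (1 : ℝ))

/-- Cartan torsion `C_{jkl} = ¼ ∂³(F²)/∂y^j∂y^k∂y^l`. -/
noncomputable def Cart {n : ℕ} (F : EuclideanSpace ℝ (Fin n) → ℝ)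
    (y : EuclideanSpace ℝ (Fin n)) (j k l : Fin n) : ℝ :=
  (1/4 : ℝ) * pd (pd (pd (fun z => (F z)^2) j) k) l y

/-- Angular metric `h_{kl} = F F_{kl}`. -/
noncomputable def ang {n : ℕ} (F : EuclideanSpace ℝ (Fin n) → ℝ)
    (y : EuclideanSpace ℝ (Fin n)) (k l : Fin n) : ℝ :=
  F y * pd (pd F k) l y

/-- Mean Cartan torsion `I_j = g^{kl} C_{jkl}`. -/
noncomputable def meanC {n : ℕ} (g : Matrix (Fin n) (Fin n) ℝ)
    (F : EuclideanSpace ℝ (Fin n) → ℝ) (y : EuclideanSpace ℝ (Fin n)) (j : Fin n) : ℝ :=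
  ∑ k, ∑ l, g⁻¹ k l * Cart F y j k l

open scoped ContDiff
open Matrix

section Calculus

variable {n : ℕ} {U : Set (EuclideanSpace ℝ (Fin n))}

lemma pd_congr_on (hU : IsOpen U) {f h : EuclideanSpace ℝ (Fin n) → ℝ}
    (hfh : ∀ z ∈ U, f z = h z) (j : Fin n) : ∀ z ∈ U, pd f j z = pd h j z := by
  intro z hz
  have : f =ᶠ[nhds z] h := Filter.eventuallyEq_of_mem (hU.mem_nhds hz) hfh
  simp only [pd, this.fderiv_eq]

lemma pd_smooth (hU : IsOpen U) {f : EuclideanSpace ℝ (Fin n) → ℝ}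
    (hf : ContDiffOn ℝ ∞ f U) (j : Fin n) : ContDiffOn ℝ ∞ (pd f j) U :=
  (hf.fderiv_of_isOpen hU (by simp)).clm_apply contDiffOn_const

lemma smooth_diffAt (hU : IsOpen U) {f : EuclideanSpace ℝ (Fin n) → ℝ}
    (hf : ContDiffOn ℝ ∞ f U) {z : EuclideanSpace ℝ (Fin n)} (hz : z ∈ U) :
    DifferentiableAt ℝ f z :=
  (hf.differentiableOn (by simp)).differentiableAt (hU.mem_nhds hz)

lemma pd_add_on (hU : IsOpen U) {f h : EuclideanSpace ℝ (Fin n) → ℝ}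
    (hf : ContDiffOn ℝ ∞ f U) (hh : ContDiffOn ℝ ∞ h U) (j : Fin n) :
    ∀ z ∈ U, pd (fun w => f w + h w) j z = pd f j z + pd h j z := by
  intro z hz
  simp only [pd]
  rw [fderiv_fun_add (smooth_diffAt hU hf hz) (smooth_diffAt hU hh hz)]
  rfl

lemma pd_mul_on (hU : IsOpen U) {f h : EuclideanSpace ℝ (Fin n) → ℝ}
    (hf : ContDiffOn ℝ ∞ f U) (hh : ContDiffOn ℝ ∞ h U) (j : Fin n) :
    ∀ z ∈ U, pd (fun w => f w * h w) j z = f z * pd h j z + pd f j z * h z := by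
  intro z hz
  simp only [pd]
  rw [fderiv_fun_mul (smooth_diffAt hU hf hz) (smooth_diffAt hU hh hz)]
  simp [mul_comm]

lemma pd_const (c : ℝ) (j : Fin n) (z : EuclideanSpace ℝ (Fin n)) :
    pd (fun _ => c) j z = 0 := by
  simp [pd]

variable (t : EuclideanSpace ℝ (Fin n) →L[ℝ] EuclideanSpace ℝ (Fin n))

lemma pd_lin (v : EuclideanSpace ℝ (Fin n)) (j : Fin n) (z : EuclideanSpace ℝ (Fin n)) :
    pd (fun w => ⟪t w, v⟫) j z = ⟪t (EuclideanSpace.single j 1), v⟫ := by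
  have h : HasFDerivAt (fun w => t w) t z := t.hasFDerivAt
  have := h.inner ℝ (hasFDerivAt_const v z)
  simp only [pd]
  rw [this.fderiv]
  simp

lemma pd_quad (ht : ∀ u v, ⟪t u, v⟫ = ⟪t v, u⟫) (j : Fin n) (z : EuclideanSpace ℝ (Fin n)) :
    pd (fun w => ⟪t w, w⟫) j z = 2 * ⟪t z, EuclideanSpace.single j 1⟫ := by
  have h : HasFDerivAt (fun w => t w) t z := t.hasFDerivAt
  have : HasFDerivAt (fun w => ⟪t w, w⟫) _ z := h.inner ℝ (hasFDerivAt_id z)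
  simp only [pd]
  rw [this.fderiv]
  have e := ht (EuclideanSpace.single j 1) z
  simp only [id, fderivInnerCLM_apply, ContinuousLinearMap.comp_apply,
    ContinuousLinearMap.prod_apply, ContinuousLinearMap.id_apply, e]
  ring

variable {N : EuclideanSpace ℝ (Fin n) → ℝ}

lemma norm_first (hU : IsOpen U) (hN : ContDiffOn ℝ ∞ N U)
    (ht : ∀ u v, ⟪t u, v⟫ = ⟪t v, u⟫) (hq : ∀ z ∈ U, N z * N z = ⟪t z, z⟫) (j : Fin n) :
    ∀ z ∈ U, N z * pd N j z = ⟪t z, EuclideanSpace.single j 1⟫ := by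
  intro z hz
  have h := pd_congr_on hU hq j z hz
  rw [pd_mul_on hU hN hN j z hz, pd_quad t ht] at h
  linarith

lemma norm_second (hU : IsOpen U) (hN : ContDiffOn ℝ ∞ N U)
    (ht : ∀ u v, ⟪t u, v⟫ = ⟪t v, u⟫) (hq : ∀ z ∈ U, N z * N z = ⟪t z, z⟫) (j k : Fin n) :
    ∀ z ∈ U, N z * pd (pd N j) k z + pd N k z * pd N j z
      = ⟪t (EuclideanSpace.single k 1), EuclideanSpace.single j 1⟫ := by
  intro z hz
  have h := pd_congr_on hU (norm_first t hU hN ht hq j) k z hz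
  rwa [pd_mul_on hU hN (pd_smooth hU hN j) k z hz, pd_lin] at h

/-- Third derivative of the condition that `N²` is a quadratic form. -/
lemma norm_third (hU : IsOpen U) (hN : ContDiffOn ℝ ∞ N U)
    (ht : ∀ u v, ⟪t u, v⟫ = ⟪t v, u⟫) (hq : ∀ z ∈ U, N z * N z = ⟪t z, z⟫) (j k l : Fin n) :
    ∀ z ∈ U, N z * pd (pd (pd N j) k) l z + pd N l z * pd (pd N j) k z
      + pd N k z * pd (pd N j) l z + pd (pd N k) l z * pd N j z = 0 := by
  intro z hz
  have hj := pd_smooth hU hN j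
  have hk := pd_smooth hU hN k
  have hjk := pd_smooth hU hj k
  have h := pd_congr_on hU (norm_second t hU hN ht hq j k) l z hz
  rw [pd_add_on hU (hN.mul hjk) (hk.mul hj) l z hz, pd_mul_on hU hN hjk l z hz,
    pd_mul_on hU hk hj l z hz, pd_const] at h
  linarith

lemma norm_symm (hU : IsOpen U) (hN : ContDiffOn ℝ ∞ N U)
    (ht : ∀ u v, ⟪t u, v⟫ = ⟪t v, u⟫) (hq : ∀ z ∈ U, N z * N z = ⟪t z, z⟫) (j k : Fin n)
    {z : EuclideanSpace ℝ (Fin n)} (hz : z ∈ U) (h0 : N z ≠ 0) :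
    pd (pd N j) k z = pd (pd N k) j z := by
  have h1 := norm_second t hU hN ht hq j k z hz
  have h2 := norm_second t hU hN ht hq k j z hz
  rw [ht] at h2
  exact mul_left_cancel₀ h0 (by linarith)

lemma sum_coord (v z : EuclideanSpace ℝ (Fin n)) :
    ∑ j, ⟪v, EuclideanSpace.single j (1 : ℝ)⟫ * z j = ⟪v, z⟫ := by
  simp [PiLp.inner_apply, mul_comm]

/-- Euler's relation `y^j N_j = N`. -/
lemma norm_euler (hU : IsOpen U) (hN : ContDiffOn ℝ ∞ N U)
    (ht : ∀ u v, ⟪t u, v⟫ = ⟪t v, u⟫) (hq : ∀ z ∈ U, N z * N z = ⟪t z, z⟫)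
    {z : EuclideanSpace ℝ (Fin n)} (hz : z ∈ U) (h0 : N z ≠ 0) :
    ∑ j, pd N j z * z j = N z := by
  apply mul_left_cancel₀ h0
  rw [hq z hz, ← sum_coord, Finset.mul_sum]
  refine Finset.sum_congr rfl fun j _ => ?_
  rw [← norm_first t hU hN ht hq j z hz, mul_assoc]

/-- Euler's relation `N_{kj} y^j = 0` for the derivatives, which are homogeneous of degree `0`. -/
lemma norm_euler' (hU : IsOpen U) (hN : ContDiffOn ℝ ∞ N U)
    (ht : ∀ u v, ⟪t u, v⟫ = ⟪t v, u⟫) (hq : ∀ z ∈ U, N z * N z = ⟪t z, z⟫) (k : Fin n)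
    {z : EuclideanSpace ℝ (Fin n)} (hz : z ∈ U) (h0 : N z ≠ 0) :
    ∑ j, pd (pd N k) j z * z j = 0 := by
  have h1 : ∑ j, (N z * pd (pd N k) j z + pd N j z * pd N k z) * z j
      = ⟪t z, EuclideanSpace.single k 1⟫ := by
    rw [ht, ← sum_coord]
    refine Finset.sum_congr rfl fun j _ => ?_
    rw [norm_second t hU hN ht hq k j z hz, ht]
  have h2 : ∑ j, (N z * pd (pd N k) j z + pd N j z * pd N k z) * z j
      = N z * ∑ j, pd (pd N k) j z * z j + pd N k z * ∑ j, pd N j z * z j := by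
    rw [Finset.mul_sum, Finset.mul_sum, ← Finset.sum_add_distrib]
    exact Finset.sum_congr rfl fun j _ => by ring
  rw [norm_euler t hU hN ht hq hz h0, h1, ← norm_first t hU hN ht hq k z hz] at h2
  exact mul_left_cancel₀ h0 (by linarith)

lemma pd_sq_two (hU : IsOpen U) (hN : ContDiffOn ℝ ∞ N U) (j k : Fin n) :
    ∀ z ∈ U, pd (pd (fun w => (N w)^2) j) k z
      = 2 * (N z * pd (pd N j) k z + pd N k z * pd N j z) := by
  intro z hz
  have hj := pd_smooth hU hN j
  have h1 : ∀ z ∈ U, pd (fun w => (N w)^2) j z = N z * pd N j z + N z * pd N j z := by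
    intro z hz
    rw [pd_congr_on hU (h := fun w => N w * N w) (fun w _ => sq (N w)) j z hz,
      pd_mul_on hU hN hN j z hz]
    ring
  rw [pd_congr_on hU h1 k z hz, pd_add_on hU (hN.mul hj) (hN.mul hj) k z hz,
    pd_mul_on hU hN hj k z hz]
  ring

lemma pd_sq_three (hU : IsOpen U) (hN : ContDiffOn ℝ ∞ N U) (j k l : Fin n) :
    ∀ z ∈ U, pd (pd (pd (fun w => (N w)^2) j) k) l z
      = 2 * (N z * pd (pd (pd N j) k) l z + pd N l z * pd (pd N j) k z
        + pd N k z * pd (pd N j) l z + pd (pd N k) l z * pd N j z) := by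
  intro z hz
  have hj := pd_smooth hU hN j
  have hk := pd_smooth hU hN k
  have hjk := pd_smooth hU hj k
  rw [pd_congr_on hU (pd_sq_two hU hN j k) l z hz,
    pd_mul_on hU contDiffOn_const ((hN.mul hjk).add (hk.mul hj)) l z hz, pd_const,
    pd_add_on hU (hN.mul hjk) (hk.mul hj) l z hz, pd_mul_on hU hN hjk l z hz,
    pd_mul_on hU hk hj l z hz]
  ring

end Calculus

/-- The pointwise linear algebra: `a`, `d` are the values of `ρ`, `Δ` at the point `Y`, with
gradients `r`, `e` and Hessians `R`, `D`. From the factored Cartan torsion `C` and the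
Euler relations, the trace of `C` determines the covector `P` of the factorization. -/
lemma bipartite_algebra {n : ℕ} (a d : ℝ) (ha : a ≠ 0) (hd : d ≠ 0) (hF0 : a + d ≠ 0)
    (r e Y : Fin n → ℝ) (R D g : Matrix (Fin n) (Fin n) ℝ)
    (hR : ∀ j k, R j k = R k j) (hD : ∀ j k, D j k = D k j)
    (hr : ∑ j, r j * Y j = a) (he : ∑ j, e j * Y j = d)
    (hRY : ∀ k, ∑ j, R k j * Y j = 0) (hDY : ∀ k, ∑ j, D k j * Y j = 0)
    (hg : ∀ j k, g j k = (a + d) * (R j k + D j k) + (r j + e j) * (r k + e k))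
    (hgi : IsUnit g.det) (C : Fin n → Fin n → Fin n → ℝ)
    (B : Fin n → Fin n → ℝ)
    (hB : ∀ j k, B j k = (a + d) * (R j k + D j k) - (a + d)^2 / d * D j k)
    (P : Fin n → ℝ) (hP : ∀ j, P j = (e j - d / a * r j) / (2 * (a + d)))
    (hC : ∀ j k l, C j k l = P j * B k l + P k * B l j + P l * B j k) (j : Fin n) :
    (∑ k, ∑ l, g⁻¹ k l * C j k l)
        + (a + d)^2 / (a * d) * ∑ m, ∑ m', g⁻¹ m m' * e m * D m' j
      = ((n : ℝ) + 1 - (a + d)^2 / d * ∑ k, ∑ l, g⁻¹ k l * D k l) * P j := by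
  set F := a + d with hF
  set f : Fin n → ℝ := fun j => r j + e j with hf
  have hgs : gᵀ = g := by
    ext i k
    rw [transpose_apply, hg, hg, hR, hD]; ring
  have hGs : ∀ i k, g⁻¹ i k = g⁻¹ k i := by
    intro i k
    have : (g⁻¹)ᵀ = g⁻¹ := by rw [transpose_nonsing_inv, hgs]
    exact congrFun (congrFun this k) i
  have hgY : g *ᵥ Y = F • f := by
    ext k
    simp only [mulVec, dotProduct, Pi.smul_apply, smul_eq_mul, hf]
    have : ∀ i, g k i * Y i = F * (R k i * Y i) + F * (D k i * Y i)
        + (r k + e k) * (r i * Y i) + (r k + e k) * (e i * Y i) := by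
      intro i; rw [hg]; ring
    simp only [this, Finset.sum_add_distrib, ← Finset.mul_sum, hRY, hDY, hr, he]
    rw [hF]; ring
  have hGf : g⁻¹ *ᵥ f = F⁻¹ • Y := by
    have : f = F⁻¹ • (g *ᵥ Y) := by rw [hgY, smul_smul, inv_mul_cancel₀ hF0, one_smul]
    rw [this, mulVec_smul, mulVec_mulVec, nonsing_inv_mul _ hgi, one_mulVec]
  have hGf' : ∀ k, ∑ l, g⁻¹ k l * f l = F⁻¹ * Y k := fun k => congrFun hGf k
  have hGg : ∀ k i, ∑ l, g⁻¹ k l * g l i = if k = i then 1 else 0 := by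
    intro k i
    have := congrFun (congrFun (nonsing_inv_mul g hgi) k) i
    rwa [mul_apply, one_apply] at this
  have hfY : ∑ k, f k * Y k = F := by
    simp only [hf, add_mul, Finset.sum_add_distrib, hr, he]; rfl
  have hBg : ∀ l i, B l i = g l i - f l * f i - F^2 / d * D l i := by
    intro l i; rw [hB, hg]; ring
  -- contraction of one index of `B` with a covector
  have contr : ∀ (v : Fin n → ℝ) (i : Fin n), ∑ k, ∑ l, g⁻¹ k l * (v k * B l i)
      = v i - F⁻¹ * (∑ k, v k * Y k) * f i
        - F^2 / d * ∑ k, ∑ l, g⁻¹ k l * v k * D l i := by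
    intro v i
    have h1 : ∀ k, ∑ l, g⁻¹ k l * (v k * B l i)
        = v k * (if k = i then 1 else 0) - F⁻¹ * f i * (v k * Y k)
          - F^2 / d * ∑ l, g⁻¹ k l * v k * D l i := by
      intro k
      have h2 : F⁻¹ * f i * (v k * Y k) = v k * f i * ∑ l, g⁻¹ k l * f l := by
        rw [hGf']; ring
      rw [h2, ← hGg, Finset.mul_sum, Finset.mul_sum, Finset.mul_sum,
        ← Finset.sum_sub_distrib, ← Finset.sum_sub_distrib]
      exact Finset.sum_congr rfl fun l _ => by rw [hBg]; ring
    simp only [h1, Finset.sum_sub_distrib, ← Finset.mul_sum]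
    simp
    ring
  have trB : ∑ k, ∑ l, g⁻¹ k l * B k l = n - 1 - F^2 / d * ∑ k, ∑ l, g⁻¹ k l * D k l := by
    have h1 : ∀ k, ∑ l, g⁻¹ k l * B k l
        = 1 - F⁻¹ * (f k * Y k) - F^2 / d * ∑ l, g⁻¹ k l * D k l := by
      intro k
      have h2 : F⁻¹ * (f k * Y k) = f k * ∑ l, g⁻¹ k l * f l := by
        rw [hGf']; ring
      have h3 : (1 : ℝ) = ∑ l, g⁻¹ k l * g l k := by rw [hGg]; simp
      rw [h2, h3, Finset.mul_sum, Finset.mul_sum,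
        ← Finset.sum_sub_distrib, ← Finset.sum_sub_distrib]
      refine Finset.sum_congr rfl fun l _ => ?_
      have h4 : g k l = g l k := congrFun (congrFun hgs l) k
      rw [hBg, h4]; ring
    simp only [h1, Finset.sum_sub_distrib, ← Finset.mul_sum, hfY, inv_mul_cancel₀ hF0]
    simp
  have hBs : ∀ i k, B i k = B k i := by
    intro i k; rw [hB, hB, hR, hD]
  have hswap : ∑ k, ∑ l, g⁻¹ k l * (P l * B j k) = ∑ k, ∑ l, g⁻¹ k l * (P k * B l j) := by
    rw [Finset.sum_comm]
    refine Finset.sum_congr rfl fun l _ => Finset.sum_congr rfl fun k _ => ?_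
    rw [hGs, hBs]
  have hsum : ∑ k, ∑ l, g⁻¹ k l * C j k l
      = P j * (∑ k, ∑ l, g⁻¹ k l * B k l) + 2 * ∑ k, ∑ l, g⁻¹ k l * (P k * B l j) := by
    rw [two_mul]
    nth_rewrite 2 [← hswap]
    simp only [Finset.mul_sum, ← Finset.sum_add_distrib]
    refine Finset.sum_congr rfl fun k _ => Finset.sum_congr rfl fun l _ => ?_
    rw [hC]; ring
  -- `P` is a combination of `e` and `f`, and `B` is annihilated by `f`
  have hPef : ∀ k, P k = 1 / (2 * a) * e k - d / (2 * F * a) * f k := by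
    intro k
    rw [hP]
    simp only [hf]
    field_simp
    rw [hF]; ring
  have hfB : ∑ k, ∑ l, g⁻¹ k l * (f k * B l j) = 0 := by
    have hYB : ∀ l, ∑ k, g⁻¹ k l * (f k * B l j) = F⁻¹ * (B j l * Y l) := by
      intro l
      have : F⁻¹ * (B j l * Y l) = B l j * ∑ k, g⁻¹ l k * f k := by
        rw [hGf', hBs]; ring
      rw [this, Finset.mul_sum]
      exact Finset.sum_congr rfl fun k _ => by rw [hGs k l]; ring
    have hB' : ∀ l, B j l * Y l
        = F * (R j l * Y l) + (F - F^2 / d) * (D j l * Y l) := by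
      intro l; rw [hB]; ring
    rw [Finset.sum_comm]
    simp only [hYB, hB', ← Finset.mul_sum, Finset.sum_add_distrib, hRY, hDY]
    simp
  have hPB : ∑ k, ∑ l, g⁻¹ k l * (P k * B l j)
      = 1 / (2 * a) * ∑ k, ∑ l, g⁻¹ k l * (e k * B l j) := by
    have : ∑ k, ∑ l, g⁻¹ k l * (P k * B l j)
        = 1 / (2 * a) * (∑ k, ∑ l, g⁻¹ k l * (e k * B l j))
          - d / (2 * F * a) * ∑ k, ∑ l, g⁻¹ k l * (f k * B l j) := by
      simp only [Finset.mul_sum, ← Finset.sum_sub_distrib]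
      refine Finset.sum_congr rfl fun k _ => Finset.sum_congr rfl fun l _ => ?_
      rw [hPef]; ring
    rw [this, hfB]; ring
  rw [hsum, hPB, trB, contr e j, he]
  generalize ∑ k, ∑ l, g⁻¹ k l * e k * D l j = X
  generalize ∑ k, ∑ l, g⁻¹ k l * D k l = Z
  rw [hPef]
  field_simp
  ring

/-- For a bipartite Finsler norm `F = ρ + Δ` on ℝⁿ and `y` off the slit at
which `(g_{jk}(y))` is invertible and `κ = n + 1 - (F²/Δ) g^{kl} Δ_{kl} ≠ 0`, the
characteristic (bipartite) tensor
`S_{jkl} = C_{jkl} - (1/κ) Σ_{(jkl)} (I_j + (F²/((F-Δ)Δ)) g^{mn} Δ_m Δ_{nj})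
(h_{kl} - (F²/Δ) Δ_{kl})` vanishes at `y`. -/
theorem stmt12 {n : ℕ}
    (s : EuclideanSpace ℝ (Fin n) →ₗ[ℝ] EuclideanSpace ℝ (Fin n) →ₗ[ℝ] ℝ)
    (hsymm : ∀ u v, s u v = s v u)
    (hpsd : ∀ y, 0 ≤ s y y)
    (stilde : EuclideanSpace ℝ (Fin n) →ₗ[ℝ] EuclideanSpace ℝ (Fin n))
    (hst : ∀ u v, s u v = ⟪stilde u, v⟫)
    (heig : ∀ μ : ℝ, Module.End.HasEigenvalue stilde μ → μ < 1)
    (Δ : EuclideanSpace ℝ (Fin n) → ℝ)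
    (hΔ : (∀ z, Δ z = Real.sqrt (s z z)) ∨ (∀ z, Δ z = -Real.sqrt (s z z)))
    (F : EuclideanSpace ℝ (Fin n) → ℝ)
    (hF : ∀ z, F z = ‖z‖ + Δ z)
    (y : EuclideanSpace ℝ (Fin n)) (hy : s y y ≠ 0)
    (g : Matrix (Fin n) (Fin n) ℝ)
    (hg : ∀ j k, g j k = (1/2 : ℝ) * pd (pd (fun z => (F z)^2) j) k y)
    (hginv : IsUnit g.det)
    (κ : ℝ)
    (hκdef : κ = (n : ℝ) + 1 - ((F y)^2 / Δ y) * ∑ k, ∑ l, g⁻¹ k l * pd (pd Δ k) l y)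
    (hκ : κ ≠ 0)
    (j k l : Fin n) :
    Cart F y j k l
      - (1 / κ) *
        ((meanC g F y j + ((F y)^2 / ((F y - Δ y) * Δ y)) *
              ∑ m, ∑ m', g⁻¹ m m' * pd Δ m y * pd (pd Δ m') j y) *
            (ang F y k l - ((F y)^2 / Δ y) * pd (pd Δ k) l y)
         + (meanC g F y k + ((F y)^2 / ((F y - Δ y) * Δ y)) *
              ∑ m, ∑ m', g⁻¹ m m' * pd Δ m y * pd (pd Δ m') k y) *
            (ang F y l j - ((F y)^2 / Δ y) * pd (pd Δ l) j y)
         + (meanC g F y l + ((F y)^2 / ((F y - Δ y) * Δ y)) *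
              ∑ m, ∑ m', g⁻¹ m m' * pd Δ m y * pd (pd Δ m') l y) *
            (ang F y j k - ((F y)^2 / Δ y) * pd (pd Δ j) k y)) = 0 := by
  classical
  let t : EuclideanSpace ℝ (Fin n) →L[ℝ] EuclideanSpace ℝ (Fin n) :=
    LinearMap.toContinuousLinearMap stilde
  have hts : ∀ u v, s u v = ⟪t u, v⟫ := hst
  have ht : ∀ u v, ⟪t u, v⟫ = ⟪t v, u⟫ := fun u v => by rw [← hts, ← hts, hsymm]
  let i : EuclideanSpace ℝ (Fin n) →L[ℝ] EuclideanSpace ℝ (Fin n) := ContinuousLinearMap.id ℝ _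
  have hi : ∀ u v, ⟪i u, v⟫ = ⟪i v, u⟫ := fun u v => real_inner_comm _ _
  have hcd : ContDiff ℝ ∞ fun z => s z z := by
    simp only [hts]
    exact t.contDiff.inner ℝ contDiff_id
  let U : Set (EuclideanSpace ℝ (Fin n)) := {z | s z z ≠ 0}
  have hU : IsOpen U := isOpen_ne_fun hcd.continuous continuous_const
  have hyU : y ∈ U := hy
  have hzne : ∀ z ∈ U, z ≠ 0 := by
    rintro z hz rfl
    exact hz (by simp)
  let ρ : EuclideanSpace ℝ (Fin n) → ℝ := fun z => ‖z‖
  have hρs : ContDiffOn ℝ ∞ ρ U := fun z hz =>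
    (contDiffAt_norm ℝ (hzne z hz)).contDiffWithinAt
  have hρq : ∀ z ∈ U, ρ z * ρ z = ⟪i z, z⟫ := fun z _ => (real_inner_self_eq_norm_mul_norm z).symm
  have hsq : ContDiffOn ℝ ∞ (fun z => Real.sqrt (s z z)) U := fun z hz =>
    (hcd.contDiffAt.sqrt hz).contDiffWithinAt
  have hΔs : ContDiffOn ℝ ∞ Δ U := by
    rcases hΔ with h | h
    · rw [funext h]; exact hsq
    · rw [funext h]; exact hsq.neg
  have hΔq : ∀ z ∈ U, Δ z * Δ z = ⟪t z, z⟫ := by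
    intro z _
    rw [← hts]
    rcases hΔ with h | h
    · rw [h, Real.mul_self_sqrt (hpsd z)]
    · rw [h, neg_mul_neg, Real.mul_self_sqrt (hpsd z)]
  have hρ0 : ρ y ≠ 0 := norm_ne_zero_iff.mpr (hzne y hyU)
  have hΔ0 : Δ y ≠ 0 := by
    intro h
    have := hΔq y hyU
    rw [h, ← hts] at this
    exact hy (by linarith)
  have hFf : F = fun z => ρ z + Δ z := funext hF
  have hFs : ContDiffOn ℝ ∞ F U := by rw [hFf]; exact hρs.add hΔs
  have hF1 : ∀ j, ∀ z ∈ U, pd F j z = pd ρ j z + pd Δ j z := fun j => by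
    rw [hFf]; exact pd_add_on hU hρs hΔs j
  have hF2 : ∀ j k, ∀ z ∈ U, pd (pd F j) k z = pd (pd ρ j) k z + pd (pd Δ j) k z := by
    intro j k z hz
    rw [pd_congr_on hU (hF1 j) k z hz,
      pd_add_on hU (pd_smooth hU hρs j) (pd_smooth hU hΔs j) k z hz]
  have hF3 : ∀ j k l, ∀ z ∈ U, pd (pd (pd F j) k) l z
      = pd (pd (pd ρ j) k) l z + pd (pd (pd Δ j) k) l z := by
    intro j k l z hz
    rw [pd_congr_on hU (hF2 j k) l z hz,
      pd_add_on hU (pd_smooth hU (pd_smooth hU hρs j) k)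
        (pd_smooth hU (pd_smooth hU hΔs j) k) l z hz]
  have hFy : F y = ρ y + Δ y := hF y
  have hRs : ∀ j k, pd (pd ρ j) k y = pd (pd ρ k) j y := fun j k =>
    norm_symm i hU hρs hi hρq j k hyU hρ0
  have hDs : ∀ j k, pd (pd Δ j) k y = pd (pd Δ k) j y := fun j k =>
    norm_symm t hU hΔs ht hΔq j k hyU hΔ0
  have hr := norm_euler i hU hρs hi hρq hyU hρ0
  have he := norm_euler t hU hΔs ht hΔq hyU hΔ0
  have hRY := fun k => norm_euler' i hU hρs hi hρq k hyU hρ0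
  have hDY := fun k => norm_euler' t hU hΔs ht hΔq k hyU hΔ0
  have hg' : ∀ j k, g j k = (ρ y + Δ y) * (pd (pd ρ j) k y + pd (pd Δ j) k y)
      + (pd ρ j y + pd Δ j y) * (pd ρ k y + pd Δ k y) := by
    intro j k
    rw [hg, pd_sq_two hU hFs j k y hyU, hF2 j k y hyU, hF1 j y hyU, hF1 k y hyU, hFy]
    ring
  have hF0 : ρ y + Δ y ≠ 0 := by
    intro h0
    -- by the Euler relations, `g y` would vanish although `y ≠ 0`
    have hgy : g *ᵥ (fun m => y m) = 0 := by
      ext k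
      have hk : ∀ m, g k m * y m = (pd ρ k y + pd Δ k y) * (pd ρ m y * y m)
          + (pd ρ k y + pd Δ k y) * (pd Δ m y * y m) := by
        intro m; rw [hg', h0]; ring
      simp only [mulVec, dotProduct, hk, Finset.sum_add_distrib, ← Finset.mul_sum, hr, he,
        Pi.zero_apply]
      rw [← mul_add, h0, mul_zero]
    have h1 : (fun m => y m) = 0 := by
      have := congrArg (fun v => g⁻¹ *ᵥ v) hgy
      simpa [mulVec_mulVec, nonsing_inv_mul _ hginv] using this
    exact hzne y hyU (by ext m; exact congrFun h1 m)
  set P : Fin n → ℝ := fun j =>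
    (pd Δ j y - Δ y / ρ y * pd ρ j y) / (2 * (ρ y + Δ y)) with hP
  set B : Fin n → Fin n → ℝ := fun j k =>
    (ρ y + Δ y) * (pd (pd ρ j) k y + pd (pd Δ j) k y)
      - (ρ y + Δ y)^2 / Δ y * pd (pd Δ j) k y with hB
  have hC : ∀ j k l, Cart F y j k l = P j * B k l + P k * B l j + P l * B j k := by
    intro j k l
    have h1 := norm_third i hU hρs hi hρq j k l y hyU
    have h2 := norm_third t hU hΔs ht hΔq j k l y hyU
    have e1 : pd (pd (pd ρ j) k) l y = -(pd ρ l y * pd (pd ρ j) k y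
        + pd ρ k y * pd (pd ρ j) l y + pd (pd ρ k) l y * pd ρ j y) / ρ y := by
      rw [eq_div_iff hρ0]; linarith
    have e2 : pd (pd (pd Δ j) k) l y = -(pd Δ l y * pd (pd Δ j) k y
        + pd Δ k y * pd (pd Δ j) l y + pd (pd Δ k) l y * pd Δ j y) / Δ y := by
      rw [eq_div_iff hΔ0]; linarith
    rw [Cart, pd_sq_three hU hFs j k l y hyU, hF3 j k l y hyU]
    simp only [hF2 _ _ y hyU, hF1 _ y hyU, hFy, e1, e2, hP, hB, hRs l j, hDs l j]
    field_simp
    ring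
  have key := bipartite_algebra (ρ y) (Δ y) hρ0 hΔ0 hF0 (fun j => pd ρ j y) (fun j => pd Δ j y)
    (fun j => y j) (fun j k => pd (pd ρ j) k y) (fun j k => pd (pd Δ j) k y) g hRs hDs hr he
    hRY hDY hg' hginv (Cart F y) B (fun _ _ => rfl) P (fun _ => rfl) hC
  have hFΔ : F y - Δ y = ρ y := by rw [hFy]; ring
  have hang : ∀ k l, ang F y k l - (F y)^2 / Δ y * pd (pd Δ k) l y = B k l := by
    intro k l
    rw [ang, hF2 k l y hyU, hFy]
  have key' : ∀ j, meanC g F y j + ((F y)^2 / ((F y - Δ y) * Δ y)) *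
      ∑ m, ∑ m', g⁻¹ m m' * pd Δ m y * pd (pd Δ m') j y = κ * P j := by
    intro j
    rw [hFΔ, hκdef, hFy]
    exact key j
  rw [key', key', key', hang, hang, hang, hC]
  field_simp
  ring
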